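/- arXiv:1210.6603 — 6 statements merged into one kernel-verified Lean document; each statement's English description precedes it below -/
import Mathlib

section
/- Let n ≥ m ≥ 1 and let A, B be complex n×m matrices. Then Pf(R(A,B)) = Σ_I Pf(R(A^I, B^I)), where the sum ranges over all m-element subsets I of {1,…,n}. -/
/-!
For a single row, with quaternion entries encoded by `a, b : Fin m → ℂ`, the matrix `R(a, b)` is
the decomposable alternating form `u ∧ v`, where `u = (a, -b)` and `v = (conj b, conj a)`
(`rowForm`), and `R(A, B)` is the sum of the forms of the rows (`Rmat_apply`).

Expanding the product over the `m` factors turns the Pfaffian of such a sum into a sum, over all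
`f : Fin m → Fin n`, of the mixed Pfaffians of the forms of the rows `f 0, …, f (m - 1)`
(`pfaffian_sum`). If `f` repeats a row, the mixed Pfaffian vanishes, because
`(u ∧ v) ∧ (u ∧ v) = 0`; concretely this is the three-term Plücker relation, summed over the
permutations (`mixedPf_eq_zero`). The injective maps `f` correspond bijectively to pairs of an
`m`-element set `I`, the image of `f`, and a bijection `g : Fin m → Fin m`; the latter are the
maps that contribute to the expansion of `Pf(R(A^I, B^I))` (`sum_eq_sum_subsets`).
-/


open Matrix BigOperators

/-- The combinatorial Pfaffian of a `(2m) × (2m)` complex matrix: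
`Pf(R) = (1/(2^m · m!)) · Σ_{σ ∈ S_{2m}} sgn(σ) · ∏_{i=1}^{m} R_{σ(2i−1), σ(2i)}`. -/
noncomputable def pfaffian (m : ℕ) (R : Matrix (Fin (2 * m)) (Fin (2 * m)) ℂ) : ℂ :=
  (1 / ((2 : ℂ) ^ m * (Nat.factorial m : ℂ))) *
    ∑ σ : Equiv.Perm (Fin (2 * m)), ((Equiv.Perm.sign σ : ℤ) : ℂ) *
      ∏ i : Fin m,
        R (σ ⟨2 * i.val, by have := i.isLt; omega⟩)
          (σ ⟨2 * i.val + 1, by have := i.isLt; omega⟩)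

/-- The `(2m) × (2m)` antisymmetric matrix
`R(A,B) = [[−B*A + (B*A)ᵗ, (A*A)ᵗ + B*B], [−A*A − (B*B)ᵗ, A*B − (A*B)ᵗ]]`. -/
noncomputable def Rmat (n m : ℕ) (A B : Matrix (Fin n) (Fin m) ℂ) :
    Matrix (Fin (2 * m)) (Fin (2 * m)) ℂ :=
  Matrix.reindex (finSumFinEquiv.trans (finCongr (by omega)))
      (finSumFinEquiv.trans (finCongr (by omega)))
    (Matrix.fromBlocks
      (-(Bᴴ * A) + (Bᴴ * A)ᵀ) ((Aᴴ * A)ᵀ + Bᴴ * B)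
      (-(Aᴴ * A) - (Bᴴ * B)ᵀ) (Aᴴ * B - (Aᴴ * B)ᵀ))

/-- `A^I`: the `m`-row submatrix of `A` consisting of the rows with indices in `I`. -/
noncomputable def rowsOf {n m : ℕ} (A : Matrix (Fin n) (Fin m) ℂ) (I : Finset (Fin n))
    (h : I.card = m) : Matrix (Fin m) (Fin m) ℂ :=
  A.submatrix (fun k => ((I.orderIsoOfFin h) k : Fin n)) id

/-- The first index of the `i`-th pair in the Pfaffian product. -/
def fstIdx {m : ℕ} (i : Fin m) : Fin (2 * m) := ⟨2 * i.val, by have := i.isLt; omega⟩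

/-- The second index of the `i`-th pair in the Pfaffian product. -/
def sndIdx {m : ℕ} (i : Fin m) : Fin (2 * m) := ⟨2 * i.val + 1, by have := i.isLt; omega⟩

/-- The vector `(a, -b)`, indexed by `Fin (2 * m)`. -/
noncomputable def rowU {m : ℕ} (a b : Fin m → ℂ) (x : Fin (2 * m)) : ℂ :=
  Sum.elim a (fun j => -b j) ((finSumFinEquiv.trans (finCongr (two_mul m).symm)).symm x)

/-- The vector `(conj b, conj a)`, indexed by `Fin (2 * m)`. -/
noncomputable def rowV {m : ℕ} (a b : Fin m → ℂ) (x : Fin (2 * m)) : ℂ :=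
  Sum.elim (fun j => star (b j)) (fun j => star (a j))
    ((finSumFinEquiv.trans (finCongr (two_mul m).symm)).symm x)

/-- The decomposable alternating form `u ∧ v` attached to a single row, with `u = rowU a b` and
`v = rowV a b`. -/
noncomputable def rowForm {m : ℕ} (a b : Fin m → ℂ) : Matrix (Fin (2 * m)) (Fin (2 * m)) ℂ :=
  fun x y => rowU a b x * rowV a b y - rowU a b y * rowV a b x

/-- The mixed (polarized) Pfaffian of `m` matrices, without the factor `1 / (2 ^ m * m!)`. -/
noncomputable def mixedPf {m : ℕ} (N : Fin m → Matrix (Fin (2 * m)) (Fin (2 * m)) ℂ) : ℂ :=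
  ∑ σ : Equiv.Perm (Fin (2 * m)), ((Equiv.Perm.sign σ : ℤ) : ℂ) *
    ∏ i : Fin m, N i (σ (fstIdx i)) (σ (sndIdx i))

theorem Rmat_apply (n m : ℕ) (A B : Matrix (Fin n) (Fin m) ℂ) (x y : Fin (2 * m)) :
    Rmat n m A B x y = ∑ k, rowForm (A k) (B k) x y := by
  obtain ⟨x, rfl⟩ := (finSumFinEquiv.trans (finCongr (two_mul m).symm)).surjective x
  obtain ⟨y, rfl⟩ := (finSumFinEquiv.trans (finCongr (two_mul m).symm)).surjective y
  simp only [Rmat, rowForm, rowU, rowV, Matrix.reindex_apply, Matrix.submatrix_apply,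
    Equiv.symm_apply_apply]
  rcases x with x | x <;> rcases y with y | y <;>
    simp only [Matrix.fromBlocks_apply₁₁, Matrix.fromBlocks_apply₁₂, Matrix.fromBlocks_apply₂₁,
      Matrix.fromBlocks_apply₂₂, Matrix.add_apply, Matrix.sub_apply, Matrix.neg_apply,
      Matrix.transpose_apply, Matrix.mul_apply, Matrix.conjTranspose_apply, Sum.elim_inl,
      Sum.elim_inr, ← Finset.sum_neg_distrib, ← Finset.sum_add_distrib,
      ← Finset.sum_sub_distrib] <;>
    exact Finset.sum_congr rfl fun k _ => by ring

/-- Multilinear expansion of the Pfaffian of a sum of matrices. -/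
theorem pfaffian_sum {n m : ℕ} (R : Matrix (Fin (2 * m)) (Fin (2 * m)) ℂ)
    (M : Fin n → Matrix (Fin (2 * m)) (Fin (2 * m)) ℂ) (h : ∀ x y, R x y = ∑ k, M k x y) :
    pfaffian m R = (1 / ((2 : ℂ) ^ m * (Nat.factorial m : ℂ))) *
      ∑ f : Fin m → Fin n, mixedPf (fun i => M (f i)) := by
  unfold pfaffian mixedPf
  rw [Finset.sum_comm]
  congr 1
  refine Finset.sum_congr rfl fun σ _ => ?_
  rw [← Finset.mul_sum]
  simp only [h, Fintype.prod_sum]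
  rfl

/-- A mixed Pfaffian in which the same form `u ∧ v` occurs twice vanishes. Exchanging the second
index of one occurrence with either index of the other changes the sign of the sum; adding the
three expressions so obtained gives a sum whose terms vanish by the Plücker relation. -/
theorem mixedPf_eq_zero {m : ℕ} (N : Fin m → Matrix (Fin (2 * m)) (Fin (2 * m)) ℂ)
    (u v : Fin (2 * m) → ℂ) {i j : Fin m} (hij : i ≠ j)
    (hi : N i = fun x y => u x * v y - u y * v x)
    (hj : N j = fun x y => u x * v y - u y * v x) : mixedPf N = 0 := by
  have hv : (i : ℕ) ≠ j := fun h => hij (Fin.ext h)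
  set G : Equiv.Perm (Fin (2 * m)) → ℂ := fun σ =>
    ∏ l ∈ (Finset.univ.erase i).erase j, N l (σ (fstIdx l)) (σ (sndIdx l)) with hG
  have split : ∀ σ : Equiv.Perm (Fin (2 * m)),
      ∏ l : Fin m, N l (σ (fstIdx l)) (σ (sndIdx l)) =
        N i (σ (fstIdx i)) (σ (sndIdx i)) * (N j (σ (fstIdx j)) (σ (sndIdx j)) * G σ) := by
    intro σ
    rw [← Finset.mul_prod_erase Finset.univ _ (Finset.mem_univ i),
      ← Finset.mul_prod_erase (Finset.univ.erase i) _
        (Finset.mem_erase.2 ⟨hij.symm, Finset.mem_univ j⟩)]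
  have key : ∀ x : Fin (2 * m), (x = fstIdx j ∨ x = sndIdx j) →
      mixedPf N = ∑ σ : Equiv.Perm (Fin (2 * m)), ((Equiv.Perm.sign σ : ℤ) : ℂ) *
        (-(N i (σ (fstIdx i)) (σ x) *
          (N j (σ (Equiv.swap (sndIdx i) x (fstIdx j)))
            (σ (Equiv.swap (sndIdx i) x (sndIdx j))) * G σ))) := by
    intro x hx
    have hxv : (x : ℕ) = 2 * j ∨ (x : ℕ) = 2 * j + 1 := by
      rcases hx with rfl | rfl
      · exact Or.inl rfl
      · exact Or.inr rfl
    have hne : sndIdx i ≠ x := by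
      intro h
      have := congrArg Fin.val h
      simp only [sndIdx] at this
      omega
    unfold mixedPf
    rw [← Equiv.sum_comp (Equiv.mulRight (Equiv.swap (sndIdx i) x))]
    refine Finset.sum_congr rfl fun σ _ => ?_
    have hGσ : G (σ * Equiv.swap (sndIdx i) x) = G σ := by
      refine Finset.prod_congr rfl fun l hl => ?_
      have hlj : (l : ℕ) ≠ j := fun h => (Finset.mem_erase.1 hl).1 (Fin.ext h)
      have hli : (l : ℕ) ≠ i := fun h =>
        (Finset.mem_erase.1 (Finset.mem_erase.1 hl).2).1 (Fin.ext h)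
      rw [Equiv.Perm.mul_apply, Equiv.Perm.mul_apply,
        Equiv.swap_apply_of_ne_of_ne (a := sndIdx i) (b := x) (x := fstIdx l),
        Equiv.swap_apply_of_ne_of_ne (a := sndIdx i) (b := x) (x := sndIdx l)] <;>
      · intro h
        have := congrArg Fin.val h
        simp only [sndIdx, fstIdx] at this
        omega
    have hfix : Equiv.swap (sndIdx i) x (fstIdx i) = fstIdx i := by
      apply Equiv.swap_apply_of_ne_of_ne <;>
      · intro h
        have := congrArg Fin.val h
        simp only [sndIdx, fstIdx] at this
        omega
    rw [Equiv.coe_mulRight, split, hGσ, Equiv.Perm.sign_mul, Equiv.Perm.sign_swap hne]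
    simp only [Equiv.Perm.mul_apply, hfix, Equiv.swap_apply_left]
    push_cast
    ring
  have h1 := key (fstIdx j) (Or.inl rfl)
  have h2 := key (sndIdx j) (Or.inr rfl)
  have n1 : Equiv.swap (sndIdx i) (fstIdx j) (sndIdx j) = sndIdx j := by
    apply Equiv.swap_apply_of_ne_of_ne <;>
    · intro h
      have := congrArg Fin.val h
      simp only [sndIdx, fstIdx] at this
      omega
  have n2 : Equiv.swap (sndIdx i) (sndIdx j) (fstIdx j) = fstIdx j := by
    apply Equiv.swap_apply_of_ne_of_ne <;>
    · intro h
      have := congrArg Fin.val h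
      simp only [sndIdx, fstIdx] at this
      omega
  have h0 : mixedPf N = ∑ σ : Equiv.Perm (Fin (2 * m)), ((Equiv.Perm.sign σ : ℤ) : ℂ) *
      (N i (σ (fstIdx i)) (σ (sndIdx i)) * (N j (σ (fstIdx j)) (σ (sndIdx j)) * G σ)) :=
    Finset.sum_congr rfl fun σ _ => by rw [split]
  have h3 : mixedPf N + mixedPf N + mixedPf N = 0 := by
    nth_rewrite 1 [h0]
    nth_rewrite 1 [h1]
    rw [h2, ← Finset.sum_add_distrib, ← Finset.sum_add_distrib]
    refine Finset.sum_eq_zero fun σ _ => ?_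
    simp only [Equiv.swap_apply_right, n1, n2, hi, hj]
    ring
  linear_combination h3 / 3

/-- A sum over all maps `Fin m → Fin n` of a function supported on injective maps, grouped
according to the image of the map. -/
theorem sum_eq_sum_subsets {n m : ℕ} (F : (Fin m → Fin n) → ℂ)
    (hF : ∀ f, ¬ Function.Injective f → F f = 0) :
    ∑ f, F f = ∑ I : {I : Finset (Fin n) // I.card = m}, ∑ g : Fin m → Fin m,
      F (fun i => ((I.1.orderIsoOfFin I.2) (g i) : Fin n)) := by
  rw [← Fintype.sum_sigma'
    (f := fun (I : {I : Finset (Fin n) // I.card = m}) (g : Fin m → Fin m) =>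
      F (fun i => ((I.1.orderIsoOfFin I.2) (g i) : Fin n)))]
  symm
  have him : ∀ (I : {I : Finset (Fin n) // I.card = m}) (g : Fin m → Fin m),
      F (fun i => ((I.1.orderIsoOfFin I.2) (g i) : Fin n)) ≠ 0 →
      I.1 = Finset.univ.image (fun i => ((I.1.orderIsoOfFin I.2) (g i) : Fin n)) := by
    intro I g h
    have hinj : Function.Injective (fun i => ((I.1.orderIsoOfFin I.2) (g i) : Fin n)) :=
      not_imp_comm.1 (hF _) h
    symm
    apply Finset.eq_of_subset_of_card_le
    · intro x hx
      obtain ⟨i, -, rfl⟩ := Finset.mem_image.1 hx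
      exact ((I.1.orderIsoOfFin I.2) (g i)).2
    · rw [Finset.card_image_of_injective _ hinj, Finset.card_univ, Fintype.card_fin, I.2]
  refine Finset.sum_bij_ne_zero
    (fun p _ _ => fun i => ((p.1.1.orderIsoOfFin p.1.2) (p.2 i) : Fin n)) ?_ ?_ ?_ ?_
  · intro p _ _
    exact Finset.mem_univ _
  · rintro ⟨I, g⟩ _ h ⟨I', g'⟩ _ h' heq
    have hI : I = I' := by
      apply Subtype.ext
      rw [him I g h, him I' g' h']
      exact congrArg (fun f => Finset.univ.image f) heq
    subst hI
    have hg : g = g' := by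
      funext i
      exact (I.1.orderIsoOfFin I.2).injective (Subtype.ext (congrFun heq i))
    rw [hg]
  · intro f _ hf
    have hinj : Function.Injective f := not_imp_comm.1 (hF f) hf
    have hc : (Finset.univ.image f).card = m := by
      rw [Finset.card_image_of_injective _ hinj, Finset.card_univ, Fintype.card_fin]
    have he : (fun i => (((Finset.univ.image f).orderIsoOfFin hc)
        (((Finset.univ.image f).orderIsoOfFin hc).symm
          ⟨f i, Finset.mem_image_of_mem f (Finset.mem_univ i)⟩) : Fin n)) = f := by
      funext i
      rw [OrderIso.apply_symm_apply]
    refine ⟨⟨⟨Finset.univ.image f, hc⟩, fun i => ((Finset.univ.image f).orderIsoOfFin hc).symm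
      ⟨f i, Finset.mem_image_of_mem f (Finset.mem_univ i)⟩⟩, Finset.mem_univ _, ?_, he⟩
    exact fun h => hf ((congrArg F he).symm.trans h)
  · intro p _ _
    rfl

/-- Quaternion Cauchy–Binet identity in complex Pfaffian form:
`Pf(R(A,B)) = Σ_I Pf(R(A^I, B^I))` over all `m`-element subsets `I` of `{1,…,n}`. -/
theorem pfaffian_cauchy_binet (n m : ℕ) (hm : 1 ≤ m) (hnm : m ≤ n)
    (A B : Matrix (Fin n) (Fin m) ℂ) :
    pfaffian m (Rmat n m A B) =
      ∑ I : {I : Finset (Fin n) // I.card = m},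
        pfaffian m (Rmat m m (rowsOf A I.1 I.2) (rowsOf B I.1 I.2)) := by
  rw [pfaffian_sum _ (fun k => rowForm (A k) (B k)) (Rmat_apply n m A B), sum_eq_sum_subsets,
    Finset.mul_sum]
  · refine Finset.sum_congr rfl fun I _ => ?_
    rw [pfaffian_sum _ (fun k => rowForm (rowsOf A I.1 I.2 k) (rowsOf B I.1 I.2 k))
      (Rmat_apply m m (rowsOf A I.1 I.2) (rowsOf B I.1 I.2))]
    rfl
  · intro f hf
    obtain ⟨i, j, hfij, hij⟩ := Function.not_injective_iff.1 hf
    exact mixedPf_eq_zero _ (rowU (A (f i)) (B (f i))) (rowV (A (f i)) (B (f i))) hij rfl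
      (by rw [← hfij]; rfl)
end

section
/- Let n ≥ m ≥ 1, let A, B be complex n×m matrices, and let λ : {1,…,n} → ℂ. Define the (2m)×(2m) matrix R_λ by (R_λ)_{i,j} := Σ_{a=1}^{n} λ_a · Ψ_a(i,j). Then Pf(R_λ) = Σ_I (∏_{a∈I} λ_a) · Pf(R(A^I, B^I)), where the sum ranges over all m-element subsets I of {1,…,n}. -/
/-!
Each `Ψ_a` is a decomposable alternating form: `Ψ_a(i,j) = u_i v_j - u_j v_i`, so it satisfies the
Plücker relation `Ψ_a(p,q) Ψ_a(r,s) - Ψ_a(p,r) Ψ_a(q,s) + Ψ_a(p,s) Ψ_a(q,r) = 0`.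

Expanding the product over `i` in `Pf(Σ_a λ_a Ψ_a)` gives a sum over maps `f : Fin m → Fin n` of
`∏ i, λ_{f i}` times the mixed Pfaffian of `Ψ_{f 0}, …, Ψ_{f (m-1)}` (`pfSum`). When `f i = f j`
with `i ≠ j`, the Plücker relation, summed over all permutations, says that three times this mixed
Pfaffian vanishes (`pfSum_eq_zero`), so only injective `f` contribute. These are grouped by their
image `I`. The same expansion of `Pf(R(A^I, B^I))`, with all weights equal to one, yields exactly
the terms with image `I`, on which `∏ i, λ_{f i}` is the constant `∏_{a ∈ I} λ_a`.
-/

open Matrix BigOperators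

/-- The functions `Ψ_a : {1,…,2m}² → ℂ` built from complex `n×m` matrices `A` and `B`. -/
noncomputable def Psi (n m : ℕ) (A B : Matrix (Fin n) (Fin m) ℂ) (a : Fin n)
    (i j : Fin (2 * m)) : ℂ :=
  if hi : i.val < m then
    if hj : j.val < m then
      -(starRingEnd ℂ) (B a ⟨i.val, hi⟩) * A a ⟨j.val, hj⟩
        + (starRingEnd ℂ) (B a ⟨j.val, hj⟩) * A a ⟨i.val, hi⟩
    else
      A a ⟨i.val, hi⟩ * (starRingEnd ℂ) (A a ⟨j.val - m, by have := j.isLt; omega⟩)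
        + B a ⟨j.val - m, by have := j.isLt; omega⟩ * (starRingEnd ℂ) (B a ⟨i.val, hi⟩)
  else
    if hj : j.val < m then
      -(A a ⟨j.val, hj⟩ * (starRingEnd ℂ) (A a ⟨i.val - m, by have := i.isLt; omega⟩)
        + B a ⟨i.val - m, by have := i.isLt; omega⟩ * (starRingEnd ℂ) (B a ⟨j.val, hj⟩))
    else
      (starRingEnd ℂ) (A a ⟨i.val - m, by have := i.isLt; omega⟩)
          * B a ⟨j.val - m, by have := j.isLt; omega⟩
        - (starRingEnd ℂ) (A a ⟨j.val - m, by have := j.isLt; omega⟩)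
          * B a ⟨i.val - m, by have := i.isLt; omega⟩

/-- The matrix `R(A,B)` with entries `R(A,B)_{i,j} = Σ_{a=1}^{n} Ψ_a(i,j)`. -/
noncomputable def RofPsi (n m : ℕ) (A B : Matrix (Fin n) (Fin m) ℂ) :
    Matrix (Fin (2 * m)) (Fin (2 * m)) ℂ :=
  fun i j => ∑ a : Fin n, Psi n m A B a i j

/-- The position of the first element of the `i`-th pair in `Fin (2 * m)`. -/
def pairFst {m : ℕ} (i : Fin m) : Fin (2 * m) := ⟨2 * i.val, by have := i.isLt; omega⟩

/-- The position of the second element of the `i`-th pair in `Fin (2 * m)`. -/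
def pairSnd {m : ℕ} (i : Fin m) : Fin (2 * m) := ⟨2 * i.val + 1, by have := i.isLt; omega⟩

/-- The unnormalised mixed Pfaffian of a family of `m` matrices: the signed sum over permutations
in which the `i`-th pair is evaluated in the `i`-th matrix. -/
noncomputable def pfSum {m : ℕ} (F : Fin m → Fin (2 * m) → Fin (2 * m) → ℂ) : ℂ :=
  ∑ σ : Equiv.Perm (Fin (2 * m)), ((Equiv.Perm.sign σ : ℤ) : ℂ) *
    ∏ i : Fin m, F i (σ (pairFst i)) (σ (pairSnd i))

theorem Psi_decomposable (n m : ℕ) (A B : Matrix (Fin n) (Fin m) ℂ) (a : Fin n) :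
    ∃ u v : Fin (2 * m) → ℂ, ∀ i j, Psi n m A B a i j = u i * v j - u j * v i := by
  refine ⟨fun i => if hi : i.val < m then A a ⟨i.val, hi⟩ else
      -B a ⟨i.val - m, by have := i.isLt; omega⟩,
    fun i => if hi : i.val < m then (starRingEnd ℂ) (B a ⟨i.val, hi⟩) else
      (starRingEnd ℂ) (A a ⟨i.val - m, by have := i.isLt; omega⟩), fun i j => ?_⟩
  by_cases hi : i.val < m <;> by_cases hj : j.val < m <;> simp only [Psi, hi, hj, dif_pos,
    dif_neg, not_false_eq_true] <;> ring

theorem Psi_plucker (n m : ℕ) (A B : Matrix (Fin n) (Fin m) ℂ) (a : Fin n)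
    (p q r s : Fin (2 * m)) :
    Psi n m A B a p q * Psi n m A B a r s - Psi n m A B a p r * Psi n m A B a q s
      - Psi n m A B a p s * Psi n m A B a r q = 0 := by
  obtain ⟨u, v, h⟩ := Psi_decomposable n m A B a
  simp only [h]
  ring

/-- Reindexing the permutation sum by right multiplication with a transposition changes its sign. -/
theorem pfSum_swap {m : ℕ} (F : Fin m → Fin (2 * m) → Fin (2 * m) → ℂ) {x y : Fin (2 * m)}
    (hxy : x ≠ y) :
    pfSum F = ∑ σ : Equiv.Perm (Fin (2 * m)), -(((Equiv.Perm.sign σ : ℤ) : ℂ) *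
      ∏ i : Fin m, F i (σ (Equiv.swap x y (pairFst i))) (σ (Equiv.swap x y (pairSnd i)))) := by
  unfold pfSum
  rw [← Equiv.sum_comp (Equiv.mulRight (Equiv.swap x y))]
  refine Finset.sum_congr rfl fun σ _ => ?_
  simp [Equiv.Perm.sign_mul, Equiv.Perm.sign_swap hxy]

/-- If two of the matrices satisfy a joint Plücker relation (as two equal decomposable alternating
forms do), the mixed Pfaffian vanishes: exchanging entries between the two pairs gives three
expressions for it, and the relation makes them cancel permutation by permutation. -/
theorem pfSum_eq_zero {m : ℕ} (F : Fin m → Fin (2 * m) → Fin (2 * m) → ℂ) {i j : Fin m}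
    (hij : i ≠ j)
    (hF : ∀ p q r s, F i p q * F j r s - F i p r * F j q s - F i p s * F j r q = 0) :
    pfSum F = 0 := by
  have hv : i.val ≠ j.val := fun h => hij (Fin.ext h)
  have h1 : pairSnd i ≠ pairFst j := by simp only [pairFst, pairSnd, ne_eq, Fin.mk.injEq]; omega
  have h2 : pairSnd i ≠ pairSnd j := by simp only [pairSnd, ne_eq, Fin.mk.injEq]; omega
  have h3 : pairFst i ≠ pairSnd i := by simp only [pairFst, pairSnd, ne_eq, Fin.mk.injEq]; omega
  have h4 : pairFst i ≠ pairFst j := by simp only [pairFst, ne_eq, Fin.mk.injEq]; omega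
  have h5 : pairFst i ≠ pairSnd j := by simp only [pairFst, pairSnd, ne_eq, Fin.mk.injEq]; omega
  have h6 : pairFst j ≠ pairSnd j := by simp only [pairFst, pairSnd, ne_eq, Fin.mk.injEq]; omega
  have hsplit : ∀ g : Fin m → ℂ, ∏ k, g k = g i * g j * ∏ k ∈ (Finset.univ.erase i).erase j, g k := by
    intro g
    rw [← Finset.mul_prod_erase _ g (Finset.mem_univ i),
      ← Finset.mul_prod_erase _ g (Finset.mem_erase.2 ⟨hij.symm, Finset.mem_univ j⟩), mul_assoc]
  have hne : ∀ k ∈ (Finset.univ.erase i).erase j, pairFst k ≠ pairSnd i ∧ pairFst k ≠ pairFst j ∧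
      pairFst k ≠ pairSnd j ∧ pairSnd k ≠ pairSnd i ∧ pairSnd k ≠ pairFst j ∧
      pairSnd k ≠ pairSnd j := by
    intro k hk
    simp only [Finset.mem_erase, Finset.mem_univ, and_true, ne_eq, Fin.ext_iff] at hk
    simp only [pairFst, pairSnd, ne_eq, Fin.mk.injEq]
    omega
  have hsum : pfSum F + pfSum F + pfSum F = 0 := by
    -- The three copies are indexed so that, for each `σ`, they form one Plücker relation.
    nth_rewrite 3 [pfSum_swap F h2]
    nth_rewrite 2 [pfSum_swap F h1]
    unfold pfSum
    rw [← Finset.sum_add_distrib, ← Finset.sum_add_distrib]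
    refine Finset.sum_eq_zero fun σ _ => ?_
    rw [hsplit, hsplit (fun k => F k (σ (Equiv.swap (pairSnd i) (pairFst j) (pairFst k))) _),
      hsplit (fun k => F k (σ (Equiv.swap (pairSnd i) (pairSnd j) (pairFst k))) _)]
    have e1 : ∏ k ∈ (Finset.univ.erase i).erase j,
        F k (σ (Equiv.swap (pairSnd i) (pairFst j) (pairFst k)))
          (σ (Equiv.swap (pairSnd i) (pairFst j) (pairSnd k))) =
        ∏ k ∈ (Finset.univ.erase i).erase j, F k (σ (pairFst k)) (σ (pairSnd k)) := by
      refine Finset.prod_congr rfl fun k hk => ?_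
      obtain ⟨a1, a2, a3, a4, a5, a6⟩ := hne k hk
      rw [Equiv.swap_apply_of_ne_of_ne a1 a2, Equiv.swap_apply_of_ne_of_ne a4 a5]
    have e2 : ∏ k ∈ (Finset.univ.erase i).erase j,
        F k (σ (Equiv.swap (pairSnd i) (pairSnd j) (pairFst k)))
          (σ (Equiv.swap (pairSnd i) (pairSnd j) (pairSnd k))) =
        ∏ k ∈ (Finset.univ.erase i).erase j, F k (σ (pairFst k)) (σ (pairSnd k)) := by
      refine Finset.prod_congr rfl fun k hk => ?_
      obtain ⟨a1, a2, a3, a4, a5, a6⟩ := hne k hk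
      rw [Equiv.swap_apply_of_ne_of_ne a1 a3, Equiv.swap_apply_of_ne_of_ne a4 a6]
    rw [e1, e2]
    simp only [Equiv.swap_apply_left, Equiv.swap_apply_right,
      Equiv.swap_apply_of_ne_of_ne h3 h4, Equiv.swap_apply_of_ne_of_ne h3 h5,
      Equiv.swap_apply_of_ne_of_ne h1.symm h6, Equiv.swap_apply_of_ne_of_ne h2.symm h6.symm]
    linear_combination ((Equiv.Perm.sign σ : ℤ) : ℂ) *
      (∏ k ∈ (Finset.univ.erase i).erase j, F k (σ (pairFst k)) (σ (pairSnd k))) *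
      hF (σ (pairFst i)) (σ (pairSnd i)) (σ (pairFst j)) (σ (pairSnd j))
  have h : (3 : ℂ) * pfSum F = 0 := by linear_combination hsum
  simpa using h

theorem pfSum_Psi_eq_zero {n m : ℕ} (A B : Matrix (Fin n) (Fin m) ℂ) {f : Fin m → Fin n}
    (hf : ¬ Function.Injective f) : pfSum (fun i => Psi n m A B (f i)) = 0 := by
  simp only [Function.Injective, not_forall] at hf
  obtain ⟨i, j, h, hij⟩ := hf
  refine pfSum_eq_zero _ hij fun p q r s => ?_
  rw [h]
  exact Psi_plucker n m A B (f j) p q r s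

/-- Multilinear expansion of the Pfaffian of a weighted sum of matrices. -/
theorem pfaffian_sum_smul {ι : Type*} [Fintype ι] [DecidableEq ι] (m : ℕ) (c : ι → ℂ)
    (F : ι → Fin (2 * m) → Fin (2 * m) → ℂ) :
    pfaffian m (fun i j => ∑ a, c a * F a i j) =
      (1 / ((2 : ℂ) ^ m * (Nat.factorial m : ℂ))) *
        ∑ f : Fin m → ι, (∏ i, c (f i)) * pfSum (fun i => F (f i)) := by
  unfold pfaffian pfSum
  congr 1
  simp only [Finset.prod_univ_sum, Fintype.piFinset_univ, Finset.mul_sum, Finset.prod_mul_distrib]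
  rw [Finset.sum_comm]
  refine Finset.sum_congr rfl fun f _ => Finset.sum_congr rfl fun σ _ => ?_
  rw [mul_left_comm]
  rfl

/-- A sum over maps `Fin m → Fin n` supported on the injective ones is grouped by image: an
injective map is uniquely the increasing enumeration of its image precomposed with a permutation of
`Fin m`. -/
theorem sum_injective_eq_sum_subset {n m : ℕ} (G : (Fin m → Fin n) → ℂ)
    (hG : ∀ f, ¬ Function.Injective f → G f = 0) :
    ∑ f, G f = ∑ I : {I : Finset (Fin n) // I.card = m},
      ∑ g : Fin m → Fin m, G (fun i => (I.1.orderIsoOfFin I.2 (g i) : Fin n)) := by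
  classical
  have hval : ∀ I : {I : Finset (Fin n) // I.card = m},
      Function.Injective fun k => (I.1.orderIsoOfFin I.2 k : Fin n) :=
    fun I => Subtype.val_injective.comp (I.1.orderIsoOfFin I.2).injective
  -- An injective `g` is a permutation of `Fin m`, so the composite has image exactly `I`.
  have himg : ∀ (I : {I : Finset (Fin n) // I.card = m}) (g : Fin m → Fin m),
      Function.Injective g →
      Finset.univ.image (fun i => (I.1.orderIsoOfFin I.2 (g i) : Fin n)) = I.1 := by
    intro I g hg
    apply Finset.eq_of_subset_of_card_le
    · intro x hx
      simp only [Finset.mem_image] at hx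
      obtain ⟨i, -, rfl⟩ := hx
      exact (I.1.orderIsoOfFin I.2 (g i)).2
    · have hc := Finset.card_image_of_injective Finset.univ ((hval I).comp hg)
      rw [Finset.card_univ, Fintype.card_fin] at hc
      exact (I.2.trans hc.symm).le
  rw [← Finset.sum_filter_of_ne (p := Function.Injective)
    (fun f _ h => by by_contra hn; exact h (hG f hn)), ← Fintype.sum_sigma',
    ← Finset.sum_filter_of_ne (p := fun x : Σ _ : {I : Finset (Fin n) // I.card = m},
      Fin m → Fin m => Function.Injective x.2)]
  · symm
    refine Finset.sum_bij (fun x _ => fun i => (x.1.1.orderIsoOfFin x.1.2 (x.2 i) : Fin n))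
      ?_ ?_ ?_ ?_
    · rintro ⟨I, g⟩ hg
      simp only [Finset.mem_filter, Finset.mem_univ, true_and] at hg ⊢
      exact (hval I).comp hg
    · rintro ⟨I, g⟩ hg ⟨J, k⟩ hk h
      simp only [Finset.mem_filter, Finset.mem_univ, true_and] at hg hk
      have hIJ : I = J := by
        apply Subtype.ext
        rw [← himg I g hg, ← himg J k hk]
        exact congrArg (fun f : Fin m → Fin n => Finset.univ.image f) h
      subst hIJ
      have : g = k := funext fun i => hval I (congrFun h i)
      rw [this]
    · intro f hf
      simp only [Finset.mem_filter, Finset.mem_univ, true_and] at hf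
      have hc : (Finset.univ.image f).card = m := by
        rw [Finset.card_image_of_injective _ hf]; simp
      refine ⟨⟨⟨Finset.univ.image f, hc⟩, fun i => ((Finset.univ.image f).orderIsoOfFin hc).symm
        ⟨f i, Finset.mem_image_of_mem f (Finset.mem_univ i)⟩⟩, ?_, ?_⟩
      · simp only [Finset.mem_filter, Finset.mem_univ, true_and]
        intro i j h
        exact hf (congrArg Subtype.val (((Finset.univ.image f).orderIsoOfFin hc).symm.injective h))
      · funext i
        simp
    · intro x _
      rfl
  · rintro ⟨I, g⟩ _ h
    by_contra hn
    refine h (hG _ fun hinj => hn fun i j hij => hinj ?_)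
    exact congrArg (fun k => (I.1.orderIsoOfFin I.2 k : Fin n)) hij

/-- Weighted quaternion Cauchy–Binet identity in complex Pfaffian form:
with `(R_λ)_{i,j} = Σ_a λ_a Ψ_a(i,j)`, one has
`Pf(R_λ) = Σ_I (∏_{a∈I} λ_a) · Pf(R(A^I, B^I))`. -/
theorem pfaffian_cauchy_binet_weighted (n m : ℕ) (hm : 1 ≤ m) (hnm : m ≤ n)
    (A B : Matrix (Fin n) (Fin m) ℂ) (lam : Fin n → ℂ) :
    pfaffian m (fun i j => ∑ a : Fin n, lam a * Psi n m A B a i j) =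
      ∑ I : {I : Finset (Fin n) // I.card = m},
        (∏ a ∈ I.1, lam a) *
          pfaffian m (RofPsi m m (rowsOf A I.1 I.2) (rowsOf B I.1 I.2)) := by
  have hR : ∀ I : {I : Finset (Fin n) // I.card = m},
      pfaffian m (RofPsi m m (rowsOf A I.1 I.2) (rowsOf B I.1 I.2)) =
      (1 / ((2 : ℂ) ^ m * (Nat.factorial m : ℂ))) * ∑ g : Fin m → Fin m,
        pfSum (fun i => Psi n m A B (I.1.orderIsoOfFin I.2 (g i))) := by
    intro I
    have h := pfaffian_sum_smul m (fun _ : Fin m => (1 : ℂ))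
      (fun k => Psi n m A B (I.1.orderIsoOfFin I.2 k))
    simp only [one_mul, Finset.prod_const_one] at h
    exact h
  simp only [hR]
  rw [pfaffian_sum_smul, sum_injective_eq_sum_subset _
    (fun f hf => by rw [pfSum_Psi_eq_zero A B hf, mul_zero]), Finset.mul_sum]
  refine Finset.sum_congr rfl fun I _ => ?_
  rw [mul_left_comm, Finset.mul_sum (a := ∏ a ∈ I.1, lam a)]
  congr 1
  refine Finset.sum_congr rfl fun g _ => ?_
  by_cases hg : Function.Injective g
  · congr 1
    have hb : Function.Bijective g := Finite.injective_iff_bijective.1 hg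
    rw [hb.prod_comp (fun k => lam (I.1.orderIsoOfFin I.2 k)),
      ← Finset.prod_coe_sort I.1]
    exact Equiv.prod_comp (I.1.orderIsoOfFin I.2).toEquiv (fun x : I.1 => lam x)
  · rw [pfSum_Psi_eq_zero, mul_zero, mul_zero]
    exact fun h => hg fun i j hij =>
      h (congrArg (fun k => (I.1.orderIsoOfFin I.2 k : Fin n)) hij)
end

section
/- Let n ≥ 1, m ≥ 2, let A, B be complex n×m matrices, and let (a_1,…,a_m) ∈ {1,…,n}^m be a tuple of indices with a_1 = a_2. Then Σ sgn(σ) · ∏_{p=1}^{m} Ψ_{a_p}(σ(2p−1), σ(2p)) = 0, where the sum is over all permutations σ of {1,…,2m} satisfying σ(1) ≤ m. -/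
/-!
For fixed `a`, the form `Psi a` is an elementary 2-vector: with `u = (A_a, -B_a)` and
`v = (conj B_a, conj A_a)` one has `Psi a i j = u i * v j - u j * v i`. Hence it satisfies the
three-term Plücker relation (`Psi_pluecker`). Since `a_1 = a_2`, the 3-cycle on the positions
`2, 3, 4`, which is even and does not move position `1`, permutes the index set of the sum, and the
three terms in each of its orbits add up to zero by the Plücker relation. Thus three times the sum
is zero.
-/

open Matrix BigOperators

/-- The three-term Plücker relation, which holds because `Psi a` has rank at most two. -/
lemma Psi_pluecker (n m : ℕ) (A B : Matrix (Fin n) (Fin m) ℂ) (a : Fin n)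
    (i j k l : Fin (2 * m)) :
    Psi n m A B a i j * Psi n m A B a k l + Psi n m A B a i k * Psi n m A B a l j
      + Psi n m A B a i l * Psi n m A B a j k = 0 := by
  obtain ⟨u, v, h⟩ : ∃ u v : Fin (2 * m) → ℂ,
      ∀ i j, Psi n m A B a i j = u i * v j - u j * v i := by
    refine ⟨fun i => if hi : i.val < m then A a ⟨i.val, hi⟩
        else -B a ⟨i.val - m, by have := i.isLt; omega⟩,
      fun i => if hi : i.val < m then (starRingEnd ℂ) (B a ⟨i.val, hi⟩)
        else (starRingEnd ℂ) (A a ⟨i.val - m, by have := i.isLt; omega⟩), fun i j => ?_⟩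
    by_cases hi : i.val < m <;> by_cases hj : j.val < m <;> simp only [Psi, hi, hj, dite_true,
      dite_false] <;> ring
  simp only [h]
  ring

/-- A sum over a set of permutations stable under right translation by `c` vanishes if the terms
`f σ`, `f (σ * c)`, `f (σ * c * c)` always add up to zero. -/
lemma sum_filter_eq_zero_of_three_cycle {α : Type*} [Fintype α] [DecidableEq α]
    (P : Equiv.Perm α → Prop) [DecidablePred P] (f : Equiv.Perm α → ℂ) (c : Equiv.Perm α)
    (hP : ∀ σ, P (σ * c) ↔ P σ) (hf : ∀ σ, f σ + f (σ * c) + f (σ * c * c) = 0) :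
    ∑ σ ∈ Finset.univ.filter P, f σ = 0 := by
  have key : ∀ g : Equiv.Perm α → ℂ,
      ∑ σ ∈ Finset.univ.filter P, g (σ * c) = ∑ σ ∈ Finset.univ.filter P, g σ := fun g =>
    Finset.sum_equiv (Equiv.mulRight c) (by simp [hP]) (by simp)
  have h1 := key f
  have h2 := key fun σ => f (σ * c)
  have h3 : ∑ σ ∈ Finset.univ.filter P, (f σ + f (σ * c) + f (σ * c * c)) = 0 :=
    Finset.sum_eq_zero fun σ _ => hf σ
  rw [Finset.sum_add_distrib, Finset.sum_add_distrib, h2, h1] at h3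
  linear_combination h3 / 3


/-- Partial cancellation: for a tuple with `a_1 = a_2`, the sum over permutations `σ`
with `σ(1) ≤ m` of `sgn(σ) · ∏_p Ψ_{a_p}(σ(2p−1), σ(2p))` vanishes. -/
theorem psi_partial_cancellation_first_slot (n m : ℕ) (hn : 1 ≤ n) (hm : 2 ≤ m)
    (A B : Matrix (Fin n) (Fin m) ℂ) (a : Fin m → Fin n)
    (ha : a ⟨0, by omega⟩ = a ⟨1, by omega⟩) :
    ∑ σ ∈ Finset.univ.filter
        (fun σ : Equiv.Perm (Fin (2 * m)) => (σ ⟨0, by omega⟩).val < m),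
      ((Equiv.Perm.sign σ : ℤ) : ℂ) *
        ∏ r : Fin m,
          Psi n m A B (a r) (σ ⟨2 * r.val, by have := r.isLt; omega⟩)
            (σ ⟨2 * r.val + 1, by have := r.isLt; omega⟩) = 0 := by
  obtain ⟨k, rfl⟩ : ∃ k, m = k + 2 := ⟨m - 2, by omega⟩
  set p0 : Fin (2 * (k + 2)) := ⟨0, by omega⟩ with hp0
  set p1 : Fin (2 * (k + 2)) := ⟨1, by omega⟩ with hp1
  set p2 : Fin (2 * (k + 2)) := ⟨2, by omega⟩ with hp2
  set p3 : Fin (2 * (k + 2)) := ⟨3, by omega⟩ with hp3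
  -- the 3-cycle `p1 ↦ p2 ↦ p3 ↦ p1`
  set c : Equiv.Perm (Fin (2 * (k + 2))) := Equiv.swap p1 p2 * Equiv.swap p2 p3 with hc
  have h12 : p1 ≠ p2 := by simp [hp1, hp2]
  have h13 : p1 ≠ p3 := by simp [hp1, hp3]
  have h23 : p2 ≠ p3 := by simp [hp2, hp3]
  have hfix : ∀ x, x ≠ p1 → x ≠ p2 → x ≠ p3 → c x = x := fun x h1 h2 h3 => by
    rw [hc, Equiv.Perm.mul_apply, Equiv.swap_apply_of_ne_of_ne h2 h3,
      Equiv.swap_apply_of_ne_of_ne h1 h2]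
  have c0 : c p0 = p0 :=
    hfix _ (by simp [hp0, hp1]) (by simp [hp0, hp2]) (by simp [hp0, hp3])
  have c1 : c p1 = p2 := by
    rw [hc, Equiv.Perm.mul_apply, Equiv.swap_apply_of_ne_of_ne h12 h13, Equiv.swap_apply_left]
  have c2 : c p2 = p3 := by
    rw [hc, Equiv.Perm.mul_apply, Equiv.swap_apply_left,
      Equiv.swap_apply_of_ne_of_ne h13.symm h23.symm]
  have c3 : c p3 = p1 := by
    rw [hc, Equiv.Perm.mul_apply, Equiv.swap_apply_right, Equiv.swap_apply_right]
  have hsign : Equiv.Perm.sign c = 1 := by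
    rw [hc, Equiv.Perm.sign_mul, Equiv.Perm.sign_swap h12, Equiv.Perm.sign_swap h23]; rfl
  -- isolates the two factors that `c` affects
  have hsplit : ∀ σ : Equiv.Perm (Fin (2 * (k + 2))),
      ∏ r : Fin (k + 2), Psi n (k + 2) A B (a r) (σ ⟨2 * r.val, by have := r.isLt; omega⟩)
          (σ ⟨2 * r.val + 1, by have := r.isLt; omega⟩)
        = Psi n (k + 2) A B (a 0) (σ p0) (σ p1) * (Psi n (k + 2) A B (a 0) (σ p2) (σ p3) *
          ∏ r : Fin k, Psi n (k + 2) A B (a r.succ.succ)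
            (σ ⟨2 * (r.val + 2), by have := r.isLt; omega⟩)
            (σ ⟨2 * (r.val + 2) + 1, by have := r.isLt; omega⟩)) := by
    intro σ
    have ha' : a 0 = a (Fin.succ 0) := ha
    rw [Fin.prod_univ_succ, Fin.prod_univ_succ, ← ha']
    rfl
  have e0 : ∀ r : Fin k, c ⟨2 * (r.val + 2), by have := r.isLt; omega⟩
      = ⟨2 * (r.val + 2), by have := r.isLt; omega⟩ := fun r => by
    apply hfix <;> simp only [hp1, hp2, hp3, ne_eq, Fin.mk.injEq] <;> omega
  have e1 : ∀ r : Fin k, c ⟨2 * (r.val + 2) + 1, by have := r.isLt; omega⟩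
      = ⟨2 * (r.val + 2) + 1, by have := r.isLt; omega⟩ := fun r => by
    apply hfix <;> simp only [hp1, hp2, hp3, ne_eq, Fin.mk.injEq] <;> omega
  refine sum_filter_eq_zero_of_three_cycle _ _ c (fun σ => ?_) (fun σ => ?_)
  · rw [Equiv.Perm.mul_apply, c0]
  · simp only [hsplit, Equiv.Perm.sign_mul, hsign, mul_one]
    simp only [Equiv.Perm.mul_apply, c0, c1, c2, c3, e0, e1]
    linear_combination ((Equiv.Perm.sign σ : ℤ) : ℂ) *
      (∏ r : Fin k, Psi n (k + 2) A B (a r.succ.succ)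
            (σ ⟨2 * (r.val + 2), by have := r.isLt; omega⟩)
            (σ ⟨2 * (r.val + 2) + 1, by have := r.isLt; omega⟩)) *
      Psi_pluecker n (k + 2) A B (a 0) (σ p0) (σ p1) (σ p2) (σ p3)
end

section
/- Let n ≥ 1, m ≥ 2, let A, B be complex n×m matrices, and let (a_1,…,a_m) ∈ {1,…,n}^m be a tuple of indices with a_1 = a_2. Then Σ sgn(σ) · ∏_{p=1}^{m} Ψ_{a_p}(σ(2p−1), σ(2p)) = 0, where the sum is over all permutations σ of {1,…,2m} satisfying σ(1) ≤ m, σ(2) ≤ m, σ(3) ≤ m and σ(4) ≤ m. -/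
/-!
For a fixed `a` and `i, j ≤ m`, the number `Ψ_a(i, j)` is a `2 × 2` minor of the matrix with rows
`A_a` and `conj B_a`, so it satisfies the three-term Plücker relation
`Ψ(w,x) Ψ(y,z) - Ψ(w,y) Ψ(x,z) + Ψ(w,z) Ψ(x,y) = 0` (`Psi_plucker`).

Right multiplication by the transposition of slots 2, 3, or of slots 2, 4, permutes the summation
class, so three times the sum equals the sum of the terms at `σ`, `σ * (2 3)` and `σ * (2 4)`.
Since `a_1 = a_2`, these three terms are, up to a common factor, the three terms of the Plücker
relation, and they cancel for each `σ`.
-/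


open Matrix BigOperators

/-- The Plücker relation among the `2 × 2` minors `Ψ_a(i, j)`, `i, j ≤ m`. The last factor
appears as `-Ψ_a(y, x)` in place of `Ψ_a(x, y)`, as it arises from transposing slots 2 and 4. -/
lemma Psi_plucker_s4 (n m : ℕ) (A B : Matrix (Fin n) (Fin m) ℂ) (a : Fin n) (w x y z : Fin (2 * m))
    (hw : w.val < m) (hx : x.val < m) (hy : y.val < m) (hz : z.val < m) :
    Psi n m A B a w x * Psi n m A B a y z - Psi n m A B a w y * Psi n m A B a x z
      - Psi n m A B a w z * Psi n m A B a y x = 0 := by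
  simp only [Psi, hw, hx, hy, hz, dif_pos]
  ring

/-- A sum over a finite group vanishes as soon as the sum of three right translates of the summand
vanishes pointwise on the summation set, provided the translations preserve that set. -/
lemma sum_eq_zero_of_three_translates {G : Type*} [Group G] [Fintype G] (p : G → Prop)
    [DecidablePred p] (f : G → ℂ) (s t : G) (hs : ∀ g, p (g * s) ↔ p g)
    (ht : ∀ g, p (g * t) ↔ p g) (h : ∀ g, p g → f g + f (g * s) + f (g * t) = 0) :
    ∑ g ∈ Finset.univ.filter p, f g = 0 := by
  have key : ∀ u : G, (∀ g, p (g * u) ↔ p g) →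
      ∑ g ∈ Finset.univ.filter p, f (g * u) = ∑ g ∈ Finset.univ.filter p, f g := by
    intro u hu
    exact Finset.sum_equiv (Equiv.mulRight u) (by simp [hu]) (by simp)
  have h3 : ∑ g ∈ Finset.univ.filter p, (f g + f (g * s) + f (g * t)) = 0 :=
    Finset.sum_eq_zero fun g hg => h g (Finset.mem_filter.mp hg).2
  rw [Finset.sum_add_distrib, Finset.sum_add_distrib, key s hs, key t ht] at h3
  linear_combination h3 / 3

/-- Partial cancellation for the first permutation class: for a tuple with `a_1 = a_2`,
the sum over permutations `σ` with `σ(1), σ(2), σ(3), σ(4)` all `≤ m` of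
`sgn(σ) · ∏_p Ψ_{a_p}(σ(2p−1), σ(2p))` vanishes. -/
theorem psi_partial_cancellation_class_one (n m : ℕ) (hn : 1 ≤ n) (hm : 2 ≤ m)
    (A B : Matrix (Fin n) (Fin m) ℂ) (a : Fin m → Fin n)
    (ha : a ⟨0, by omega⟩ = a ⟨1, by omega⟩) :
    ∑ σ ∈ Finset.univ.filter
        (fun σ : Equiv.Perm (Fin (2 * m)) =>
          (σ ⟨0, by omega⟩).val < m ∧ (σ ⟨1, by omega⟩).val < m ∧
          (σ ⟨2, by omega⟩).val < m ∧ (σ ⟨3, by omega⟩).val < m),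
      ((Equiv.Perm.sign σ : ℤ) : ℂ) *
        ∏ r : Fin m,
          Psi n m A B (a r) (σ ⟨2 * r.val, by have := r.isLt; omega⟩)
            (σ ⟨2 * r.val + 1, by have := r.isLt; omega⟩) = 0 := by
  obtain ⟨k, rfl⟩ : ∃ k, m = k + 2 := ⟨m - 2, by omega⟩
  -- The slots 2, 3, 4 have indices 1, 2, 3.
  let s : Equiv.Perm (Fin (2 * (k + 2))) := Equiv.swap ⟨1, by omega⟩ ⟨2, by omega⟩
  let t : Equiv.Perm (Fin (2 * (k + 2))) := Equiv.swap ⟨1, by omega⟩ ⟨3, by omega⟩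
  have s0 : s ⟨0, by omega⟩ = ⟨0, by omega⟩ :=
    Equiv.swap_apply_of_ne_of_ne (by simp) (by simp)
  have s1 : s ⟨1, by omega⟩ = ⟨2, by omega⟩ := Equiv.swap_apply_left _ _
  have s2 : s ⟨2, by omega⟩ = ⟨1, by omega⟩ := Equiv.swap_apply_right _ _
  have s3 : s ⟨3, by omega⟩ = ⟨3, by omega⟩ :=
    Equiv.swap_apply_of_ne_of_ne (by simp) (by simp)
  have t0 : t ⟨0, by omega⟩ = ⟨0, by omega⟩ :=
    Equiv.swap_apply_of_ne_of_ne (by simp) (by simp)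
  have t1 : t ⟨1, by omega⟩ = ⟨3, by omega⟩ := Equiv.swap_apply_left _ _
  have t2 : t ⟨2, by omega⟩ = ⟨2, by omega⟩ :=
    Equiv.swap_apply_of_ne_of_ne (by simp) (by simp)
  have t3 : t ⟨3, by omega⟩ = ⟨1, by omega⟩ := Equiv.swap_apply_right _ _
  have sge : ∀ (j : ℕ) (hj : j < 2 * (k + 2)), 4 ≤ j → s ⟨j, hj⟩ = ⟨j, hj⟩ := fun j hj h =>
    Equiv.swap_apply_of_ne_of_ne (by simp; omega) (by simp; omega)
  have tge : ∀ (j : ℕ) (hj : j < 2 * (k + 2)), 4 ≤ j → t ⟨j, hj⟩ = ⟨j, hj⟩ := fun j hj h =>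
    Equiv.swap_apply_of_ne_of_ne (by simp; omega) (by simp; omega)
  have ss : Equiv.Perm.sign s = -1 := Equiv.Perm.sign_swap (by simp)
  have st : Equiv.Perm.sign t = -1 := Equiv.Perm.sign_swap (by simp)
  -- The first two factors of the product, separated from the factors untouched by `s` and `t`.
  have split : ∀ σ : Equiv.Perm (Fin (2 * (k + 2))),
      ∏ r : Fin (k + 2), Psi n (k + 2) A B (a r) (σ ⟨2 * r.val, by have := r.isLt; omega⟩)
            (σ ⟨2 * r.val + 1, by have := r.isLt; omega⟩) =
        Psi n (k + 2) A B (a ⟨0, by omega⟩) (σ ⟨0, by omega⟩) (σ ⟨1, by omega⟩) *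
        (Psi n (k + 2) A B (a ⟨0, by omega⟩) (σ ⟨2, by omega⟩) (σ ⟨3, by omega⟩) *
        ∏ r : Fin k, Psi n (k + 2) A B (a r.succ.succ)
          (σ ⟨2 * (r.val + 1 + 1), by have := r.isLt; omega⟩)
          (σ ⟨2 * (r.val + 1 + 1) + 1, by have := r.isLt; omega⟩)) := by
    intro σ
    rw [Fin.prod_univ_succ, Fin.prod_univ_succ]
    nth_rewrite 2 [ha]
    rfl
  apply sum_eq_zero_of_three_translates _ _ s t
  · intro σ
    simp only [Equiv.Perm.mul_apply, s0, s1, s2, s3]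
    tauto
  · intro σ
    simp only [Equiv.Perm.mul_apply, t0, t1, t2, t3]
    tauto
  · rintro σ ⟨h0, h1, h2, h3⟩
    have hs : ∀ r : Fin k,
        s ⟨2 * (r.val + 1 + 1), by have := r.isLt; omega⟩ = ⟨2 * (r.val + 1 + 1), by omega⟩ ∧
        s ⟨2 * (r.val + 1 + 1) + 1, by have := r.isLt; omega⟩ =
          ⟨2 * (r.val + 1 + 1) + 1, by omega⟩ :=
      fun r => ⟨sge _ _ (by omega), sge _ _ (by omega)⟩
    have ht : ∀ r : Fin k,
        t ⟨2 * (r.val + 1 + 1), by have := r.isLt; omega⟩ = ⟨2 * (r.val + 1 + 1), by omega⟩ ∧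
        t ⟨2 * (r.val + 1 + 1) + 1, by have := r.isLt; omega⟩ =
          ⟨2 * (r.val + 1 + 1) + 1, by omega⟩ :=
      fun r => ⟨tge _ _ (by omega), tge _ _ (by omega)⟩
    have hP := Psi_plucker_s4 n (k + 2) A B (a ⟨0, by omega⟩) _ _ _ _ h0 h1 h2 h3
    simp only [split]
    simp only [Equiv.Perm.mul_apply, s0, s1, s2, s3, t0, t1, t2, t3, hs, ht,
      Equiv.Perm.sign_mul, ss, st]
    push_cast
    linear_combination (((Equiv.Perm.sign σ : ℤ) : ℂ) *
      ∏ r : Fin k, Psi n (k + 2) A B (a r.succ.succ)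
          (σ ⟨2 * (r.val + 1 + 1), by have := r.isLt; omega⟩)
          (σ ⟨2 * (r.val + 1 + 1) + 1, by have := r.isLt; omega⟩)) * hP
end

section
/- Let n, m ≥ 1 and let f, g : {1,…,n} × {1,…,2m} → ℂ. For a ∈ {1,…,n} define ω_a(i,j) := f(a,i)·g(a,j) − f(a,j)·g(a,i). Then Pf of the (2m)×(2m) matrix with entries Σ_{a=1}^{n} ω_a(i,j) equals Σ_I Pf of the (2m)×(2m) matrix with entries Σ_{a∈I} ω_a(i,j), where the outer sum ranges over all m-element subsets I of {1,…,n}. -/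
/-!
Expand both sides multilinearly in the forms `ω_a`. The Pfaffian of `∑_{a ∈ S} ω_a` is, up to the
normalising constant, the sum over colourings `c : Fin m → Fin n` with values in `S` of
`T(c) = ∑_σ sgn σ ∏ᵢ ω_{c i}(σ(2i), σ(2i+1))` (`pfaffian_sum_eq`). Since `ω_a ∧ ω_a = 0` for a
decomposable form, `T(c)` vanishes unless `c` is injective: choosing one of the two terms of each
`ω_{c i}` turns `T(c)` into a signed sum of determinants, whose columns indexed by `2i` and `2i+1` are
`f (c i)` and `g (c i)` in some order, so that `c i = c j` forces a repeated column
(`colouring_sum_eq_zero`). An injective `c` takes values in exactly one `m`-element set, its image,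
so both sides are the sum of `T(c)` over injective `c`.
-/

open Matrix BigOperators

theorem prod_fin_two_mul (m : ℕ) (F : Fin (2 * m) → ℂ) :
    ∏ k, F k = ∏ i : Fin m, F ⟨2 * i.val, by have := i.isLt; omega⟩ *
      F ⟨2 * i.val + 1, by have := i.isLt; omega⟩ := by
  induction m with
  | zero => simp
  | succ m ih =>
    rw [Fin.prod_univ_castSucc (n := m)]
    change ∏ k : Fin (2 * m + 1 + 1), F k = _
    rw [Fin.prod_univ_castSucc, Fin.prod_univ_castSucc, ih (fun k => F k.castSucc.castSucc),
      mul_assoc]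
    rfl

/-- The pair `(f, g)` as a single family, with `f` at `true` and `g` at `false`. -/
def pick {n N : ℕ} (f g : Fin n → Fin N → ℂ) (a : Fin n) (b : Bool) : Fin N → ℂ :=
  if b then f a else g a

/-- The coefficient of `ω_{c 0} ∧ … ∧ ω_{c (m-1)}` (up to normalisation), where
`ω_a(i,j) = f(a,i)g(a,j) − f(a,j)g(a,i)`. -/
def colouringSum {n m : ℕ} (f g : Fin n → Fin (2 * m) → ℂ) (c : Fin m → Fin n) : ℂ :=
  ∑ σ : Equiv.Perm (Fin (2 * m)), ((Equiv.Perm.sign σ : ℤ) : ℂ) *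
    ∏ i : Fin m,
      (f (c i) (σ ⟨2 * i.val, by have := i.isLt; omega⟩) *
        g (c i) (σ ⟨2 * i.val + 1, by have := i.isLt; omega⟩) -
       f (c i) (σ ⟨2 * i.val + 1, by have := i.isLt; omega⟩) *
        g (c i) (σ ⟨2 * i.val, by have := i.isLt; omega⟩))

/-- For a fixed choice `b` of one term in each form, the alternating sum is a determinant; a
repeated colour repeats a column. -/
theorem choice_sum_eq_zero {n m : ℕ} (f g : Fin n → Fin (2 * m) → ℂ) (c : Fin m → Fin n)
    (hc : ¬ Function.Injective c) (b : Fin m → Bool) :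
    ∑ σ : Equiv.Perm (Fin (2 * m)), ((Equiv.Perm.sign σ : ℤ) : ℂ) *
      ∏ i : Fin m, pick f g (c i) (b i) (σ ⟨2 * i.val, by have := i.isLt; omega⟩) *
        pick f g (c i) (!b i) (σ ⟨2 * i.val + 1, by have := i.isLt; omega⟩) = 0 := by
  let q : Fin (2 * m) → Fin m := fun k => ⟨k.val / 2, by have := k.isLt; omega⟩
  let M : Matrix (Fin (2 * m)) (Fin (2 * m)) ℂ := fun l k =>
    pick f g (c (q k)) (xor (b (q k)) (decide (k.val % 2 = 1))) l
  have hdet : M.det = 0 := by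
    simp only [Function.Injective, not_forall] at hc
    obtain ⟨i, j, hij, hne⟩ := hc
    have hv : i.val ≠ j.val := fun h => hne (Fin.ext h)
    -- the column of the pair `j` that equals column `2i` depends on whether `b i` and `b j` agree
    by_cases hb : b i = b j
    · refine Matrix.det_zero_of_column_eq (i := ⟨2 * i.val, by omega⟩)
        (j := ⟨2 * j.val, by omega⟩) (by simpa using hv) (fun l => ?_)
      simp [M, q, hij, hb]
    · refine Matrix.det_zero_of_column_eq (i := ⟨2 * i.val, by omega⟩)
        (j := ⟨2 * j.val + 1, by omega⟩) (by simp; omega) (fun l => ?_)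
      have h2 : (2 * j.val + 1) / 2 = j.val := by omega
      have hb' : (!b j) = b i := by revert hb; cases b i <;> cases b j <;> simp
      simp [M, q, hij, h2, hb', Nat.add_mod]
  rw [← hdet, Matrix.det_apply]
  refine Finset.sum_congr rfl fun σ _ => ?_
  rw [Units.smul_def, zsmul_eq_mul, prod_fin_two_mul]
  congr 1
  refine Finset.prod_congr rfl fun i _ => ?_
  have h2 : (2 * i.val + 1) / 2 = i.val := by omega
  simp [M, q, h2, Nat.add_mod]

theorem colouring_sum_eq_zero {n m : ℕ} (f g : Fin n → Fin (2 * m) → ℂ) (c : Fin m → Fin n)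
    (hc : ¬ Function.Injective c) : colouringSum f g c = 0 := by
  have key : ∀ (a : Fin n) (x y : Fin (2 * m)), f a x * g a y - f a y * g a x =
      ∑ b : Bool, (if b then (1 : ℂ) else -1) * (pick f g a b x * pick f g a (!b) y) := by
    intro a x y
    simp [pick]
    ring
  unfold colouringSum
  simp only [key, Finset.prod_univ_sum, Finset.mul_sum]
  rw [Finset.sum_comm]
  refine Finset.sum_eq_zero fun b _ => ?_
  have h := choice_sum_eq_zero f g c hc b
  rw [← mul_zero (∏ i, if b i then (1 : ℂ) else -1), ← h, Finset.mul_sum]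
  refine Finset.sum_congr rfl fun σ _ => ?_
  rw [Finset.prod_mul_distrib]
  ring

theorem pfaffian_sum_eq {n m : ℕ} (f g : Fin n → Fin (2 * m) → ℂ) (S : Finset (Fin n)) :
    pfaffian m (fun i j => ∑ a ∈ S, (f a i * g a j - f a j * g a i)) =
      (1 / ((2 : ℂ) ^ m * (Nat.factorial m : ℂ))) *
        ∑ c : Fin m → Fin n, if ∀ i, c i ∈ S then colouringSum f g c else 0 := by
  unfold pfaffian
  congr 1
  simp only [Finset.prod_univ_sum, Finset.mul_sum]
  rw [Finset.sum_comm, ← Finset.sum_filter]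
  refine Finset.sum_congr ?_ fun c _ => rfl
  ext c
  simp

theorem sum_subsets_eq {n m : ℕ} (c : Fin m → Fin n) (hc : Function.Injective c) (t : ℂ) :
    ∑ I : {I : Finset (Fin n) // I.card = m}, (if ∀ i, c i ∈ I.1 then t else 0) = t := by
  have hcard : (Finset.univ.image c).card = m := by
    rw [Finset.card_image_of_injective _ hc]; simp
  rw [Finset.sum_eq_single ⟨Finset.univ.image c, hcard⟩]
  · simp
  · rintro ⟨I, hI⟩ _ hne
    refine if_neg fun h => hne (Subtype.ext ?_)
    refine (Finset.eq_of_subset_of_card_le ?_ (by rw [hcard, hI])).symm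
    intro x hx
    obtain ⟨i, -, rfl⟩ := Finset.mem_image.1 hx
    exact h i
  · simp

/-- Pfaffian Cauchy–Binet identity for a sum of decomposable antisymmetric forms:
with `ω_a(i,j) = f(a,i)g(a,j) − f(a,j)g(a,i)`,
`Pf(Σ_a ω_a) = Σ_I Pf(Σ_{a∈I} ω_a)` over all `m`-element subsets `I` of `{1,…,n}`. -/
theorem pfaffian_cauchy_binet_decomposable (n m : ℕ) (hn : 1 ≤ n) (hm : 1 ≤ m)
    (f g : Fin n → Fin (2 * m) → ℂ) :
    pfaffian m (fun i j => ∑ a : Fin n, (f a i * g a j - f a j * g a i)) =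
      ∑ I : {I : Finset (Fin n) // I.card = m},
        pfaffian m (fun i j => ∑ a ∈ I.1, (f a i * g a j - f a j * g a i)) := by
  simp only [pfaffian_sum_eq]
  rw [← Finset.mul_sum, Finset.sum_comm]
  congr 1
  refine Finset.sum_congr rfl fun c _ => ?_
  by_cases hc : Function.Injective c
  · rw [sum_subsets_eq c hc]; simp
  · simp [colouring_sum_eq_zero f g c hc]
end

section
/- For each n ∈ ℕ let r_n ∈ ℕ and let λ^{(n)} : {1,…,r_n} → [0,1]. Let μ_n be a Borel probability measure on ℝ whose characteristic function satisfies, for all t ∈ ℝ, ∫ e^{itx} dμ_n(x) = ∏_{k=1}^{r_n} (1 + (e^{it} − 1)·λ^{(n)}_k). Set m_n := Σ_{k=1}^{r_n} λ^{(n)}_k and v_n := Σ_{k=1}^{r_n} λ^{(n)}_k (1 − λ^{(n)}_k), and assume v_n → ∞ as n → ∞. Then the pushforward of μ_n under the map x ↦ (x − m_n)/√v_n converges weakly to the standard Gaussian measure N(0,1) on ℝ. -/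
/-!
By Lévy's continuity theorem it suffices to show that the characteristic functions converge
pointwise to `exp (-t² / 2)`. With `s = t / √v_n`, the characteristic function of the normalized
measure at `t` is the product over `k` of the centred Bernoulli characteristic functions
`(1 - p) e^{-isp} + p e^{is(1 - p)}` with `p = λ^{(n)}_k`. Each factor differs from
`exp (-p (1 - p) s² / 2)` by at most `2 p (1 - p) |s|³` (`norm_bernFactor_sub_exp_le`), and both have
norm at most one, so the difference of the two products is at most
`2 v_n |s|³ = 2 t² |s|` (`norm_prod_sub_prod_le_sum`), which tends to zero, while the product of
the Gaussian factors is exactly `exp (-v_n s² / 2) = exp (-t² / 2)`.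
-/

open MeasureTheory ProbabilityTheory Filter BigOperators

/-- Characteristic function at `s` of a centred Bernoulli variable with success probability `p`. -/
noncomputable def bernFactor (p s : ℝ) : ℂ :=
  (1 - p) * Complex.exp (-(s * p : ℝ) * Complex.I) + p * Complex.exp ((s * (1 - p) : ℝ) * Complex.I)

lemma bernFactor_eq (p s : ℝ) :
    bernFactor p s = Complex.exp (-(Complex.I * s) * p)
      * (1 + (Complex.exp (Complex.I * s) - 1) * p) := by
  have h : Complex.exp ((s * (1 - p) : ℝ) * Complex.I)
      = Complex.exp (-(Complex.I * s) * p) * Complex.exp (Complex.I * s) := by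
    rw [← Complex.exp_add]; congr 1; push_cast; ring
  have h' : Complex.exp (-(s * p : ℝ) * Complex.I) = Complex.exp (-(Complex.I * s) * p) := by
    congr 1; push_cast; ring
  rw [bernFactor, h, h']
  ring

lemma norm_bernFactor_le_one {p : ℝ} (h0 : 0 ≤ p) (h1 : p ≤ 1) (s : ℝ) :
    ‖bernFactor p s‖ ≤ 1 := by
  refine (norm_add_le _ _).trans ?_
  rw [norm_mul, norm_mul, ← Complex.ofReal_neg, Complex.norm_exp_ofReal_mul_I,
    Complex.norm_exp_ofReal_mul_I, ← Complex.ofReal_one, ← Complex.ofReal_sub,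
    Complex.norm_real, Complex.norm_real, Real.norm_of_nonneg (sub_nonneg.2 h1),
    Real.norm_of_nonneg h0]
  linarith

lemma norm_exp_mul_I_taylor_two_le {x : ℝ} (hx : |x| ≤ 1) :
    ‖Complex.exp (x * Complex.I) - (1 + x * Complex.I - x ^ 2 / 2)‖ ≤ |x| ^ 3 := by
  have hn : ‖(x : ℂ) * Complex.I‖ = |x| := by simp
  have h := Complex.exp_bound (x := (x : ℂ) * Complex.I) (by rw [hn]; exact hx)
    (n := 3) (by norm_num)
  rw [hn] at h
  have hs : ∑ m ∈ Finset.range 3, ((x : ℂ) * Complex.I) ^ m / (m.factorial : ℂ)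
      = 1 + x * Complex.I - x ^ 2 / 2 := by
    simp [Finset.sum_range_succ, mul_pow, Nat.factorial]
    ring
  rw [hs] at h
  refine h.trans ?_
  have : 0 ≤ |x| ^ 3 := by positivity
  norm_num [Nat.factorial]
  linarith

/-- The first two moments of the centred Bernoulli law are `0` and `p (1 - p)`, so second-order Taylor
expansion matches the Gaussian factor of the same variance; the error keeps the factor
`p (1 - p)`, which is what makes it summable against the variance. -/
lemma norm_bernFactor_sub_exp_le {p s : ℝ} (h0 : 0 ≤ p) (h1 : p ≤ 1) (hs : |s| ≤ 1) :
    ‖bernFactor p s - Complex.exp ((-(p * (1 - p) * s ^ 2 / 2) : ℝ) : ℂ)‖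
      ≤ 2 * (p * (1 - p)) * |s| ^ 3 := by
  have hq : 0 ≤ 1 - p := sub_nonneg.2 h1
  have ha : 0 ≤ |s| := abs_nonneg s
  have hab1 : |-(s * p)| = |s| * p := by rw [abs_neg, abs_mul, abs_of_nonneg h0]
  have hab2 : |s * (1 - p)| = |s| * (1 - p) := by rw [abs_mul, abs_of_nonneg hq]
  have e1 := norm_exp_mul_I_taylor_two_le (x := -(s * p)) (by rw [hab1]; nlinarith)
  have e2 := norm_exp_mul_I_taylor_two_le (x := s * (1 - p)) (by rw [hab2]; nlinarith)
  rw [hab1] at e1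
  rw [hab2] at e2
  have hpq : 0 ≤ p * (1 - p) := mul_nonneg h0 hq
  have hpq1 : p * (1 - p) ≤ 1 := by nlinarith
  have hs2 : s ^ 2 = |s| ^ 2 := (sq_abs s).symm
  have hs2' : |s| ^ 2 ≤ 1 := pow_le_one₀ ha hs
  set x : ℝ := p * (1 - p) * s ^ 2 / 2 with hx
  have hx0 : 0 ≤ x := by positivity
  have hx1 : x ≤ 1 := by
    rw [hx, hs2]; nlinarith [mul_le_one₀ hpq1 (by positivity) hs2']
  have e3 : ‖Complex.exp ((-x : ℝ) : ℂ) - 1 - ((-x : ℝ) : ℂ)‖ ≤ x ^ 2 := by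
    have hnx : ‖((-x : ℝ) : ℂ)‖ = x := by
      rw [Complex.norm_real, norm_neg, Real.norm_of_nonneg hx0]
    have := Complex.norm_exp_sub_one_sub_id_le (x := ((-x : ℝ) : ℂ)) (by rw [hnx]; exact hx1)
    rwa [hnx] at this
  have hx2 : x ^ 2 ≤ p * (1 - p) * |s| ^ 3 := by
    have h4 : |s| ^ 4 ≤ |s| ^ 3 := pow_le_pow_of_le_one ha hs (by norm_num)
    have : x ^ 2 = (p * (1 - p)) * ((p * (1 - p)) * |s| ^ 4 / 4) := by rw [hx, hs2]; ring
    rw [this]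
    refine mul_le_mul_of_nonneg_left ?_ hpq
    have : 0 ≤ |s| ^ 4 := by positivity
    nlinarith
  have key : bernFactor p s - Complex.exp ((-x : ℝ) : ℂ)
      = ((1 - p : ℝ) : ℂ) * (Complex.exp ((-(s * p) : ℝ) * Complex.I)
            - (1 + (-(s * p) : ℝ) * Complex.I - ((-(s * p) : ℝ) : ℂ) ^ 2 / 2))
        + (p : ℂ) * (Complex.exp ((s * (1 - p) : ℝ) * Complex.I)
            - (1 + (s * (1 - p) : ℝ) * Complex.I - ((s * (1 - p) : ℝ) : ℂ) ^ 2 / 2))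
        - (Complex.exp ((-x : ℝ) : ℂ) - 1 - ((-x : ℝ) : ℂ)) := by
    rw [bernFactor, hx]
    push_cast
    ring
  rw [key]
  refine (norm_sub_le _ _).trans ?_
  refine (add_le_add_left (norm_add_le _ _) _).trans ?_
  rw [norm_mul, norm_mul, Complex.norm_real, Complex.norm_real, Real.norm_of_nonneg hq,
    Real.norm_of_nonneg h0]
  have f1 := mul_le_mul_of_nonneg_left e1 hq
  have f2 := mul_le_mul_of_nonneg_left e2 h0
  have f3 : (1 - p) * (|s| * p) ^ 3 + p * (|s| * (1 - p)) ^ 3 ≤ p * (1 - p) * |s| ^ 3 := by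
    have : (1 - p) * (|s| * p) ^ 3 + p * (|s| * (1 - p)) ^ 3
        = p * (1 - p) * |s| ^ 3 * (1 - 2 * (p * (1 - p))) := by ring
    rw [this]
    have : 0 ≤ p * (1 - p) * |s| ^ 3 := by positivity
    nlinarith
  linarith

lemma norm_prod_sub_prod_le_sum {ι : Type*} (S : Finset ι) (f g : ι → ℂ)
    (hf : ∀ i, ‖f i‖ ≤ 1) (hg : ∀ i, ‖g i‖ ≤ 1) :
    ‖∏ i ∈ S, f i - ∏ i ∈ S, g i‖ ≤ ∑ i ∈ S, ‖f i - g i‖ := by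
  classical
  induction S using Finset.induction_on with
  | empty => simp
  | insert a S ha ih =>
    rw [Finset.prod_insert ha, Finset.prod_insert ha, Finset.sum_insert ha]
    have hP : ‖∏ i ∈ S, g i‖ ≤ 1 := by
      rw [norm_prod]
      exact Finset.prod_le_one (fun i _ => norm_nonneg _) (fun i _ => hg i)
    have e : f a * ∏ i ∈ S, f i - g a * ∏ i ∈ S, g i
        = (f a - g a) * ∏ i ∈ S, g i + f a * (∏ i ∈ S, f i - ∏ i ∈ S, g i) := by ring
    rw [e]
    refine (norm_add_le _ _).trans (add_le_add ?_ ?_)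
    · rw [norm_mul]
      exact mul_le_of_le_one_right (norm_nonneg _) hP
    · rw [norm_mul]
      exact (mul_le_of_le_one_left (norm_nonneg _) (hf a)).trans ih

/-- The quantitative form of the theorem for a single measure: `s` plays the role of
`t / √v`, where `v` is the sum of the `p k * (1 - p k)`. -/
lemma norm_prod_bernFactor_sub_exp_le {r : ℕ} {p : Fin r → ℝ} (h0 : ∀ k, 0 ≤ p k)
    (h1 : ∀ k, p k ≤ 1) {s : ℝ} (hs : |s| ≤ 1) :
    ‖∏ k, bernFactor (p k) s
        - Complex.exp ((-((∑ k, p k * (1 - p k)) * s ^ 2 / 2) : ℝ) : ℂ)‖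
      ≤ 2 * (∑ k, p k * (1 - p k)) * |s| ^ 3 := by
  have e : Complex.exp ((-((∑ k, p k * (1 - p k)) * s ^ 2 / 2) : ℝ) : ℂ)
      = ∏ k, Complex.exp ((-(p k * (1 - p k) * s ^ 2 / 2) : ℝ) : ℂ) := by
    rw [← Complex.exp_sum, ← Complex.ofReal_sum, Finset.sum_neg_distrib, Finset.sum_mul,
      Finset.sum_div]
  rw [e]
  refine (norm_prod_sub_prod_le_sum _ _ _ (fun k => norm_bernFactor_le_one (h0 k) (h1 k) s)
    fun k => ?_).trans ?_
  · rw [Complex.norm_exp, Complex.ofReal_re, Real.exp_le_one_iff, neg_nonpos]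
    have := mul_nonneg (h0 k) (sub_nonneg.2 (h1 k))
    positivity
  · rw [Finset.mul_sum, Finset.sum_mul]
    exact Finset.sum_le_sum fun k _ => norm_bernFactor_sub_exp_le (h0 k) (h1 k) hs

lemma charFun_map_normalize {r : ℕ} {p : Fin r → ℝ} {ν : Measure ℝ}
    (hchar : ∀ t : ℝ, ∫ x, Complex.exp (Complex.I * t * x) ∂ν
        = ∏ k, (1 + (Complex.exp (Complex.I * t) - 1) * (p k : ℂ))) (c t : ℝ) :
    charFun (ν.map fun x => (x - ∑ k, p k) / c) t = ∏ k, bernFactor (p k) (t / c) := by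
  rw [charFun_apply_real, integral_map (by fun_prop) (by fun_prop)]
  have e : ∀ x : ℝ, Complex.exp (t * (((x - ∑ k, p k) / c : ℝ) : ℂ) * Complex.I)
      = Complex.exp (∑ k, -(Complex.I * (t / c : ℝ)) * p k)
        * Complex.exp (Complex.I * (t / c : ℝ) * x) := by
    intro x
    rw [← Complex.exp_add, ← Finset.mul_sum]
    congr 1
    push_cast
    ring
  simp_rw [e]
  rw [integral_const_mul, hchar, Complex.exp_sum, ← Finset.prod_mul_distrib]
  exact Finset.prod_congr rfl fun k _ => (bernFactor_eq _ _).symm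

/-- CLT for the number of points of Pfaffian point fields with finite-rank kernels:
if a sequence of Borel probability measures `μ_n` on `ℝ` has characteristic functions
`∏_{k=1}^{r_n} (1 + (e^{it} − 1) λ^{(n)}_k)` with `λ^{(n)}_k ∈ [0,1]`, and the variances
`v_n = Σ_k λ^{(n)}_k (1 − λ^{(n)}_k)` tend to infinity, then the pushforwards of `μ_n`
under `x ↦ (x − m_n)/√v_n` (with `m_n = Σ_k λ^{(n)}_k`) converge weakly to the standard
Gaussian measure `N(0,1)`. -/
theorem pfaffian_point_field_clt
    (r : ℕ → ℕ) (lam : (n : ℕ) → Fin (r n) → ℝ)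
    (h0 : ∀ n k, 0 ≤ lam n k) (h1 : ∀ n k, lam n k ≤ 1)
    (μ : ℕ → Measure ℝ) (hprob : ∀ n, IsProbabilityMeasure (μ n))
    (hchar : ∀ n, ∀ t : ℝ,
      ∫ x, Complex.exp (Complex.I * t * x) ∂(μ n)
        = ∏ k : Fin (r n), (1 + (Complex.exp (Complex.I * t) - 1) * (lam n k : ℂ)))
    (hvar : Tendsto (fun n => ∑ k : Fin (r n), lam n k * (1 - lam n k)) atTop atTop) :
    Tendsto (fun n =>
        ProbabilityMeasure.map (⟨μ n, hprob n⟩ : ProbabilityMeasure ℝ)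
          (f := fun x => (x - ∑ k : Fin (r n), lam n k) /
              Real.sqrt (∑ k : Fin (r n), lam n k * (1 - lam n k)))
          (((measurable_id.sub measurable_const).div_const _).aemeasurable))
      atTop (nhds (⟨gaussianReal 0 1, inferInstance⟩ : ProbabilityMeasure ℝ)) := by
  refine ProbabilityMeasure.tendsto_iff_tendsto_charFun.2 fun t => ?_
  change Tendsto (fun n => charFun ((μ n).map fun x => (x - ∑ k, lam n k) /
    √(∑ k, lam n k * (1 - lam n k))) t) atTop (nhds (charFun (gaussianReal 0 1) t))
  have hlim : charFun (gaussianReal 0 1) t = Complex.exp ((-(t ^ 2 / 2) : ℝ) : ℂ) := by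
    rw [charFun_gaussianReal]
    congr 1
    push_cast
    simp
  rw [hlim, tendsto_iff_norm_sub_tendsto_zero]
  set v : ℕ → ℝ := fun n => ∑ k : Fin (r n), lam n k * (1 - lam n k) with hv
  have hs : Tendsto (fun n => t / √(v n)) atTop (nhds 0) :=
    (Real.tendsto_sqrt_atTop.comp hvar).const_div_atTop t
  have hs1 : ∀ᶠ n in atTop, |t / √(v n)| ≤ 1 := by
    have := hs.abs
    rw [abs_zero] at this
    exact this.eventually_le_const one_pos
  have hb : Tendsto (fun n => 2 * t ^ 2 * |t / √(v n)|) atTop (nhds 0) := by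
    simpa using hs.abs.const_mul (2 * t ^ 2)
  refine squeeze_zero' (Eventually.of_forall fun _ => norm_nonneg _) ?_ hb
  filter_upwards [hs1, hvar.eventually_gt_atTop 0] with n hn hpos
  have hvs : v n * (t / √(v n)) ^ 2 = t ^ 2 := by
    rw [div_pow, Real.sq_sqrt hpos.le]
    field_simp
  have h := norm_prod_bernFactor_sub_exp_le (h0 n) (h1 n) hn
  rw [← charFun_map_normalize (hchar n) (√(v n)) t] at h
  change ‖_ - Complex.exp ((-(v n * (t / √(v n)) ^ 2 / 2) : ℝ) : ℂ)‖
    ≤ 2 * v n * |t / √(v n)| ^ 3 at h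
  have h3 : 2 * v n * |t / √(v n)| ^ 3 = 2 * t ^ 2 * |t / √(v n)| := by
    rw [← hvs, ← sq_abs (t / √(v n))]
    ring
  rw [hvs, h3] at h
  exact h
end
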